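/- (Convergence of the Fletcher–Reeves-type directions.) Let 0 < c₂ < 1/2 and suppose g_k ≠ 0 for all k ≥ 0, η_0 = −g_0, η_{k+1} = −g_{k+1} + β_{k+1} v_k with β_{k+1} = ‖g_{k+1}‖²/‖g_k‖², for every k ≥ 0 both |⟨g_{k+1}, v_k⟩| ≤ c₂ |⟨g_k, η_k⟩| and ‖v_k‖ ≤ ‖η_k‖ hold, and the Zoutendijk condition ∑_{k=0}^∞ ⟨g_k, η_k⟩²/‖η_k‖² < ∞ holds. Then lim inf_{k→∞} ‖g_k‖ = 0. -/

import Mathlib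

open scoped RealInnerProductSpace

/-!
After division by `‖g k‖ ^ 2` the Fletcher–Reeves coefficient becomes `1`: with
`ζ k = η k / ‖g k‖ ^ 2` and `w k = v k / ‖g k‖ ^ 2`, the recursion reads
`ζ (k + 1) = w k - g (k + 1) / ‖g (k + 1)‖ ^ 2`. Put `ρ k = ⟪g k, ζ k⟫`. The Wolfe-type bound gives
`|ρ (k + 1) + 1| ≤ c * |ρ k|`, so for `c < 1` the `ρ k` stay bounded while two consecutive ones
cannot both be small. If `‖g k‖` were bounded away from `0`, expanding `‖ζ (k + 1)‖ ^ 2` would show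
that `‖ζ k‖ ^ 2` grows at most linearly, and Zoutendijk's series, whose terms are
`ρ k ^ 2 / ‖ζ k‖ ^ 2`, would diverge like the harmonic series.
-/

open Filter

section RealSequences

lemma le_max_of_succ_le_mul_add {𝕜 : Type*} [Field 𝕜] [LinearOrder 𝕜] [IsStrictOrderedRing 𝕜]
    {a : ℕ → 𝕜} {b c : 𝕜} (hc0 : 0 ≤ c) (hc1 : c < 1) (ha : ∀ k, a (k + 1) ≤ c * a k + b) (k : ℕ) :
    a k ≤ max (a 0) (b / (1 - c)) := by
  set M := max (a 0) (b / (1 - c))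
  have hM : b ≤ M * (1 - c) := (div_le_iff₀ (sub_pos.2 hc1)).1 (le_max_right _ _)
  induction k with
  | zero => exact le_max_left _ _
  | succ k ih =>
    calc a (k + 1) ≤ c * a k + b := ha k
      _ ≤ c * M + M * (1 - c) := by gcongr
      _ = M := by ring

lemma not_summable_of_one_div_succ_le_mul_add_succ {z : ℕ → ℝ} {C : ℝ}
    (h : ∀ k : ℕ, 1 / ((k : ℝ) + 1) ≤ C * (z k + z (k + 1))) : ¬ Summable z := by
  intro hz
  have hpairs : Summable fun k => C * (z k + z (k + 1)) :=
    (hz.add ((summable_nat_add_iff 1).2 hz)).mul_left C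
  have hharmonic : Summable fun k : ℕ => 1 / ((k : ℝ) + 1) :=
    .of_nonneg_of_le (fun k => by positivity) h hpairs
  exact Real.not_summable_one_div_natCast ((summable_nat_add_iff 1).1 (by simpa using hharmonic))

lemma not_summable_of_sq_le_succ_mul {ρ z : ℕ → ℝ} (hρ : ∀ k, 1 ≤ |ρ k| + |ρ (k + 1)|)
    (hz : ∀ k, 0 ≤ z k) (hρz : ∀ k, ρ k ^ 2 ≤ (k + 1) * z k) : ¬ Summable z := by
  refine not_summable_of_one_div_succ_le_mul_add_succ (C := 4) fun k => ?_
  have hnext : ρ (k + 1) ^ 2 ≤ 2 * (k + 1) * z (k + 1) := by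
    refine (hρz (k + 1)).trans (mul_le_mul_of_nonneg_right ?_ (hz _))
    push_cast
    linarith [(Nat.cast_nonneg k : (0 : ℝ) ≤ k)]
  rw [div_le_iff₀ (by positivity)]
  calc (1 : ℝ) ≤ (|ρ k| + |ρ (k + 1)|) ^ 2 := one_le_pow₀ (hρ k)
    _ ≤ 2 * (ρ k ^ 2 + ρ (k + 1) ^ 2) := by
        simpa only [sq_abs] using add_sq_le (a := |ρ k|) (b := |ρ (k + 1)|)
    _ ≤ 2 * (2 * (k + 1) * z k + 2 * (k + 1) * z (k + 1)) := by
        have : 0 ≤ (k + 1) * z k := mul_nonneg (by positivity) (hz k)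
        linarith [hρz k]
    _ = 4 * (z k + z (k + 1)) * (k + 1) := by ring

lemma liminf_eq_zero_of_frequently_lt {α : Type*} {f : Filter α} {u : α → ℝ} (hu : ∀ x, 0 ≤ u x)
    (h : ∀ ε > 0, ∃ᶠ x in f, u x < ε) : liminf u f = 0 := by
  have hle (ε : ℝ) (hε : 0 < ε) : ∃ᶠ x in f, u x ≤ ε := (h ε hε).mono fun _ => le_of_lt
  apply le_antisymm
  · exact le_of_forall_pos_le_add fun ε hε => by
      simpa using liminf_le_of_frequently_le (hle ε hε) (isBoundedUnder_of ⟨0, hu⟩)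
  · exact le_liminf_of_le (.of_frequently_le (hle 1 one_pos)) (.of_forall hu)

end RealSequences

section InnerProductSpace

variable {H : Type*} [SeminormedAddCommGroup H] [InnerProductSpace ℝ H]

lemma real_inner_sub_inv_norm_sq_smul_self {x : H} (hx : ‖x‖ ≠ 0) (y : H) :
    ⟪x, y - (‖x‖ ^ 2)⁻¹ • x⟫ = ⟪x, y⟫ - 1 := by
  rw [inner_sub_right, real_inner_smul_right, real_inner_self_eq_norm_sq,
    inv_mul_cancel₀ (pow_ne_zero 2 hx)]

lemma norm_sub_inv_norm_sq_smul_sq_real {x : H} (hx : ‖x‖ ≠ 0) (y : H) :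
    ‖y - (‖x‖ ^ 2)⁻¹ • x‖ ^ 2 = ‖y‖ ^ 2 + (1 - 2 * ⟪x, y⟫) / ‖x‖ ^ 2 := by
  rw [norm_sub_sq_real, real_inner_smul_right, real_inner_comm, norm_smul, norm_inv, norm_pow,
    norm_norm]
  field_simp
  ring

/-- The Fletcher–Reeves recursion in rescaled form: for gradients `g`, directions `η` and
transported directions `v`, the sequences `ζ` and `w` stand for `η k / ‖g k‖ ^ 2` and
`v k / ‖g k‖ ^ 2`. The constant `c` is the one of the strong Wolfe curvature condition. The initial
direction `ζ 0` is left free, which makes the notion invariant under shifts of the index. -/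
structure IsRescaledFletcherReeves (c : ℝ) (g ζ w : ℕ → H) : Prop where
  norm_ne_zero (k : ℕ) : ‖g k‖ ≠ 0
  direction_succ (k : ℕ) : ζ (k + 1) = w k - (‖g (k + 1)‖ ^ 2)⁻¹ • g (k + 1)
  abs_inner_transport_le (k : ℕ) : |⟪g (k + 1), w k⟫| ≤ c * |⟪g k, ζ k⟫|
  norm_transport_le (k : ℕ) : ‖w k‖ ≤ ‖ζ k‖

namespace IsRescaledFletcherReeves

variable {c : ℝ} {g ζ w : ℕ → H}

lemma of_fletcherReeves {η v : ℕ → H} (hg : ∀ k, ‖g k‖ ≠ 0)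
    (hrec : ∀ k, η (k + 1) = -g (k + 1) + (‖g (k + 1)‖ ^ 2 / ‖g k‖ ^ 2) • v k)
    (hwolfe : ∀ k, |⟪g (k + 1), v k⟫| ≤ c * |⟪g k, η k⟫|) (hv : ∀ k, ‖v k‖ ≤ ‖η k‖) :
    IsRescaledFletcherReeves c g (fun k => (‖g k‖ ^ 2)⁻¹ • η k)
      (fun k => (‖g k‖ ^ 2)⁻¹ • v k) where
  norm_ne_zero := hg
  direction_succ k := by
    have hcoeff : (‖g (k + 1)‖ ^ 2)⁻¹ * (‖g (k + 1)‖ ^ 2 / ‖g k‖ ^ 2) = (‖g k‖ ^ 2)⁻¹ := by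
      have := hg (k + 1)
      field_simp
    rw [hrec, smul_add, smul_neg, smul_smul, hcoeff, neg_add_eq_sub]
  abs_inner_transport_le k := by
    simp only [real_inner_smul_right, abs_mul]
    rw [mul_left_comm]
    gcongr
    exact hwolfe k
  norm_transport_le k := by
    simp only [norm_smul]
    gcongr
    exact hv k

lemma shift (h : IsRescaledFletcherReeves c g ζ w) (N : ℕ) :
    IsRescaledFletcherReeves c (fun k => g (k + N)) (fun k => ζ (k + N)) (fun k => w (k + N)) where
  norm_ne_zero k := h.norm_ne_zero (k + N)
  direction_succ k := by simpa only [add_right_comm k 1 N] using h.direction_succ (k + N)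
  abs_inner_transport_le k := by
    simpa only [add_right_comm k 1 N] using h.abs_inner_transport_le (k + N)
  norm_transport_le k := h.norm_transport_le (k + N)

lemma abs_inner_succ_add_one_le (h : IsRescaledFletcherReeves c g ζ w) (k : ℕ) :
    |⟪g (k + 1), ζ (k + 1)⟫ + 1| ≤ c * |⟪g k, ζ k⟫| := by
  rw [h.direction_succ, real_inner_sub_inv_norm_sq_smul_self (h.norm_ne_zero _), sub_add_cancel]
  exact h.abs_inner_transport_le k

lemma one_le_abs_inner_add_abs_inner_succ (h : IsRescaledFletcherReeves c g ζ w) (hc : c ≤ 1)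
    (k : ℕ) : 1 ≤ |⟪g k, ζ k⟫| + |⟪g (k + 1), ζ (k + 1)⟫| :=
  calc (1 : ℝ) ≤ ⟪g (k + 1), ζ (k + 1)⟫ + 1 + |⟪g (k + 1), ζ (k + 1)⟫| := by
        linarith [neg_abs_le ⟪g (k + 1), ζ (k + 1)⟫]
    _ ≤ c * |⟪g k, ζ k⟫| + |⟪g (k + 1), ζ (k + 1)⟫| := by
        gcongr
        exact (le_abs_self _).trans (h.abs_inner_succ_add_one_le k)
    _ ≤ |⟪g k, ζ k⟫| + |⟪g (k + 1), ζ (k + 1)⟫| := by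
        gcongr
        exact mul_le_of_le_one_left (abs_nonneg _) hc

lemma abs_inner_le_max (h : IsRescaledFletcherReeves c g ζ w) (hc0 : 0 ≤ c) (hc1 : c < 1) (k : ℕ) :
    |⟪g k, ζ k⟫| ≤ max |⟪g 0, ζ 0⟫| (1 / (1 - c)) := by
  refine le_max_of_succ_le_mul_add (a := fun k => |⟪g k, ζ k⟫|) hc0 hc1 (fun k => ?_) k
  calc |⟪g (k + 1), ζ (k + 1)⟫| = |⟪g (k + 1), ζ (k + 1)⟫ + 1 - 1| := by rw [add_sub_cancel_right]
    _ ≤ |⟪g (k + 1), ζ (k + 1)⟫ + 1| + |1| := abs_sub _ _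
    _ ≤ c * |⟪g k, ζ k⟫| + 1 := by
        rw [abs_one]
        gcongr
        exact h.abs_inner_succ_add_one_le k

lemma norm_sq_succ_le (h : IsRescaledFletcherReeves c g ζ w) (k : ℕ) :
    ‖ζ (k + 1)‖ ^ 2 ≤ ‖ζ k‖ ^ 2 + (1 + 2 * (c * |⟪g k, ζ k⟫|)) / ‖g (k + 1)‖ ^ 2 := by
  rw [h.direction_succ, norm_sub_inv_norm_sq_smul_sq_real (h.norm_ne_zero _)]
  gcongr ?_ ^ 2 + ?_ / _
  · exact h.norm_transport_le k
  · linarith [neg_abs_le ⟪g (k + 1), w k⟫, h.abs_inner_transport_le k]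

lemma exists_norm_sq_le_mul_succ (h : IsRescaledFletcherReeves c g ζ w) (hc0 : 0 ≤ c) (hc1 : c < 1)
    {ε : ℝ} (hε : 0 < ε) (hg : ∀ k, ε ≤ ‖g k‖) : ∃ C, ∀ k : ℕ, ‖ζ k‖ ^ 2 ≤ C * (k + 1) := by
  set M := max |⟪g 0, ζ 0⟫| (1 / (1 - c))
  have : 0 ≤ M := le_max_of_le_left (abs_nonneg _)
  set B := (1 + 2 * (c * M)) / ε ^ 2
  have : 0 ≤ B := by positivity
  have hstep (k : ℕ) : ‖ζ (k + 1)‖ ^ 2 ≤ 1 * ‖ζ k‖ ^ 2 + B :=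
    calc ‖ζ (k + 1)‖ ^ 2 ≤ ‖ζ k‖ ^ 2 + (1 + 2 * (c * |⟪g k, ζ k⟫|)) / ‖g (k + 1)‖ ^ 2 :=
          h.norm_sq_succ_le k
      _ ≤ ‖ζ k‖ ^ 2 + (1 + 2 * (c * M)) / ε ^ 2 := by
          gcongr
          · exact h.abs_inner_le_max hc0 hc1 k
          · exact hg (k + 1)
      _ = 1 * ‖ζ k‖ ^ 2 + B := by rw [one_mul]
  have hgrowth (k : ℕ) : ‖ζ k‖ ^ 2 ≤ ‖ζ 0‖ ^ 2 + k * B := by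
    simpa using discrete_gronwall_prod_general (u := fun k => ‖ζ k‖ ^ 2) (c := fun _ => 1)
      (b := fun _ => B) (fun k _ => hstep k) (fun _ _ => zero_le_one) k.zero_le
  refine ⟨‖ζ 0‖ ^ 2 + B, fun k => ?_⟩
  calc ‖ζ k‖ ^ 2 ≤ ‖ζ 0‖ ^ 2 + k * B := hgrowth k
    _ ≤ ‖ζ 0‖ ^ 2 + k * B + (k * ‖ζ 0‖ ^ 2 + B) := le_add_of_nonneg_right (by positivity)
    _ = (‖ζ 0‖ ^ 2 + B) * (k + 1) := by ring

lemma not_forall_le_norm (h : IsRescaledFletcherReeves c g ζ w) (hc0 : 0 ≤ c) (hc1 : c < 1)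
    {z : ℕ → ℝ} (hz : Summable z) (hzout : ∀ k, ⟪g k, ζ k⟫ ^ 2 ≤ z k * ‖ζ k‖ ^ 2)
    {ε : ℝ} (hε : 0 < ε) : ¬ ∀ k, ε ≤ ‖g k‖ := by
  intro hg
  obtain ⟨C, hC⟩ := h.exists_norm_sq_le_mul_succ hc0 hc1 hε hg
  have hC0 : 0 ≤ C := by simpa using (sq_nonneg ‖ζ 0‖).trans (hC 0)
  have hlin (k : ℕ) : ⟪g k, ζ k⟫ ^ 2 ≤ (k + 1) * (C * |z k|) :=
    calc ⟪g k, ζ k⟫ ^ 2 ≤ z k * ‖ζ k‖ ^ 2 := hzout k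
      _ ≤ |z k| * (C * (k + 1)) := by
          gcongr
          · exact le_abs_self _
          · exact hC k
      _ = (k + 1) * (C * |z k|) := by ring
  exact not_summable_of_sq_le_succ_mul (h.one_le_abs_inner_add_abs_inner_succ hc1.le)
    (fun k => by positivity) hlin (hz.abs.mul_left C)

lemma frequently_norm_lt (h : IsRescaledFletcherReeves c g ζ w) (hc0 : 0 ≤ c) (hc1 : c < 1)
    {z : ℕ → ℝ} (hz : Summable z) (hzout : ∀ k, ⟪g k, ζ k⟫ ^ 2 ≤ z k * ‖ζ k‖ ^ 2)
    {ε : ℝ} (hε : 0 < ε) : ∃ᶠ k in atTop, ‖g k‖ < ε := by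
  refine frequently_atTop.2 fun N => ?_
  have hshift := (h.shift N).not_forall_le_norm hc0 hc1 ((summable_nat_add_iff N).2 hz)
    (fun k => hzout (k + N)) hε
  push Not at hshift
  obtain ⟨k, hk⟩ := hshift
  exact ⟨k + N, Nat.le_add_left N k, hk⟩

end IsRescaledFletcherReeves

/-- Zoutendijk's condition is multiplied out because for `c > 1 / 2`, or after an arbitrary `η 0`,
some `η k` may vanish, where the quotient `⟪g k, η k⟫ ^ 2 / ‖η k‖ ^ 2` would be a junk value. -/
theorem stmt9_general {c : ℝ} (hc0 : 0 ≤ c) (hc1 : c < 1) {g η v : ℕ → H} (hg : ∀ k, ‖g k‖ ≠ 0)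
    (hrec : ∀ k, η (k + 1) = -g (k + 1) + (‖g (k + 1)‖ ^ 2 / ‖g k‖ ^ 2) • v k)
    (hwolfe : ∀ k, |⟪g (k + 1), v k⟫| ≤ c * |⟪g k, η k⟫|) (hv : ∀ k, ‖v k‖ ≤ ‖η k‖)
    {z : ℕ → ℝ} (hz : Summable z) (hzout : ∀ k, ⟪g k, η k⟫ ^ 2 ≤ z k * ‖η k‖ ^ 2) :
    liminf (fun k => ‖g k‖) atTop = 0 := by
  have hFR := IsRescaledFletcherReeves.of_fletcherReeves hg hrec hwolfe hv
  refine liminf_eq_zero_of_frequently_lt (fun _ => norm_nonneg _) fun ε hε =>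
    hFR.frequently_norm_lt hc0 hc1 hz (fun k => ?_) hε
  rw [real_inner_smul_right, norm_smul, mul_pow, mul_pow, norm_inv, norm_pow, norm_norm,
    mul_left_comm]
  gcongr
  exact hzout k

end InnerProductSpace

/-- Convergence of the Fletcher–Reeves-type directions. -/
theorem stmt9 {H : Type*} [NormedAddCommGroup H] [InnerProductSpace ℝ H]
    (c₂ : ℝ) (hc₂0 : 0 < c₂) (hc₂ : c₂ < 1 / 2)
    (g η v : ℕ → H)
    (hg : ∀ k, g k ≠ 0)
    (hη0 : η 0 = -g 0)
    (hrec : ∀ k, η (k + 1) = -g (k + 1) + (‖g (k + 1)‖ ^ 2 / ‖g k‖ ^ 2) • v k)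
    (hwolfe : ∀ k, |(⟪g (k + 1), v k⟫)| ≤ c₂ * |(⟪g k, η k⟫)|)
    (hv : ∀ k, ‖v k‖ ≤ ‖η k‖)
    (hzout : Summable (fun k => ⟪g k, η k⟫ ^ 2 / ‖η k‖ ^ 2)) :
    Filter.liminf (fun k => ‖g k‖) Filter.atTop = 0 :=
  stmt9_general hc₂0.le (by linarith) (fun k => norm_ne_zero_iff.2 (hg k)) hrec hwolfe hv hzout
    fun k => (div_mul_cancel_of_imp fun h => by
      rw [norm_eq_zero.1 (sq_eq_zero_iff.1 h), inner_zero_right, zero_pow two_ne_zero]).ge
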